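/- Let G ⊆ ℂ be open. Let f₊ : {z ∈ G : Im z ≥ 0} → ℂ be continuous and holomorphic on {z ∈ G : Im z > 0}, and let f₋ : {z ∈ G : Im z ≤ 0} → ℂ be continuous and holomorphic on {z ∈ G : Im z < 0}. Define F : G → ℂ by F(z) = f₊(z) if Im z > 0 and F(z) = f₋(z) if Im z ≤ 0. Then for every test function φ on ℂ whose support is a compact subset of G, ∫_ℂ F(z)·(∂̄φ)(z) d²z = −(i/2)·∫_{x ∈ ℝ, x ∈ G} (f₊(x) − f₋(x))·φ(x) dx. (Equivalently, ∂̄F(x+iy) = (i/2)(f(x+i0) − f(x−i0))·δ(y) in the sense of distributions.) -/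

import Mathlib

open MeasureTheory

/-- The complex conjugate (Wirtinger) derivative `∂̄φ = (1/2)(∂φ/∂x + i ∂φ/∂y)`. -/
noncomputable def wirtingerBar (φ : ℂ → ℂ) (z : ℂ) : ℂ :=
  (1 / 2) * (fderiv ℝ φ z 1 + Complex.I * fderiv ℝ φ z Complex.I)

/-!
On each closed half-plane Green's formula applies to `φ f`: since `f` is holomorphic,
`∂̄(φ f) = f ∂̄φ`, and since `φ f` has compact support, only the integral over the real axis
survives. The two half-planes induce opposite orientations on the real axis, so summing them leaves
the jump `f₊ - f₋`. Holomorphy fails on the axis itself, so one needs the version of Green's formula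
that asks for differentiability only in the interior and continuity up to the boundary.
-/

open Set

section Topology

variable {X 𝕜 E : Type*} [TopologicalSpace X] [Zero 𝕜] [TopologicalSpace 𝕜] [TopologicalSpace E]
  [Zero E] [SMulWithZero 𝕜 E] [ContinuousSMul 𝕜 E]

theorem continuousOn_smul_of_tsupport_subset {G S : Set X} {ψ : X → 𝕜} {f : X → E}
    (hG : IsOpen G) (hψ : ContinuousOn ψ S) (hsub : tsupport ψ ⊆ G) (hf : ContinuousOn f (G ∩ S)) :
    ContinuousOn (fun x => ψ x • f x) S := by
  intro x hx
  by_cases hxψ : x ∈ tsupport ψ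
  · have hfx : ContinuousWithinAt f S x :=
      (continuousWithinAt_inter' (mem_nhdsWithin_of_mem_nhds (hG.mem_nhds (hsub hxψ)))).1
        (inter_comm G S ▸ hf x ⟨hsub hxψ, hx⟩)
    exact (hψ x hx).smul hfx
  · have hzero : (fun y => ψ y • f y) =ᶠ[nhds x] fun _ => 0 := by
      filter_upwards [notMem_tsupport_iff_eventuallyEq.1 hxψ] with y hy
      simp only [hy, Pi.zero_apply, zero_smul]
    exact (continuousAt_const.congr hzero.symm).continuousWithinAt

end Topology

theorem hasFDerivAt_smul_of_mem_tsupport_imp {𝕜 𝕜' V E : Type*} [NontriviallyNormedField 𝕜]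
    [NormedRing 𝕜'] [NormedAlgebra 𝕜 𝕜'] [NormedAddCommGroup V] [NormedSpace 𝕜 V]
    [NormedAddCommGroup E] [NormedSpace 𝕜 E] [Module 𝕜' E] [IsBoundedSMul 𝕜' E]
    [IsScalarTower 𝕜 𝕜' E] {φ : V → 𝕜'} {f : V → E} {φ' : V →L[𝕜] 𝕜'} {f' : V →L[𝕜] E} {z : V}
    (hφ : HasFDerivAt φ φ' z) (hf : z ∈ tsupport φ → HasFDerivAt f f' z) :
    HasFDerivAt (fun w => φ w • f w) (φ z • f' + φ'.smulRight (f z)) z := by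
  by_cases hz : z ∈ tsupport φ
  · exact hφ.smul (hf hz)
  · have hφz := notMem_tsupport_iff_eventuallyEq.1 hz
    have hφ'_zero : φ' = 0 := hφ.unique ((hasFDerivAt_const 0 z).congr_of_eventuallyEq hφz)
    have hzero : (fun w => φ w • f w) =ᶠ[nhds z] fun _ => 0 := by
      filter_upwards [hφz] with w hw
      simp only [hw, Pi.zero_apply, zero_smul]
    convert (hasFDerivAt_const (0 : E) z).congr_of_eventuallyEq hzero
    ext
    simp [hφz.eq_of_nhds, hφ'_zero]

theorem integrableOn_of_continuousOn_of_hasCompactSupport {X E : Type*} [TopologicalSpace X]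
    [MeasurableSpace X] [OpensMeasurableSpace X] [NormedAddCommGroup E]
    {μ : Measure X} [IsFiniteMeasureOnCompacts μ] {S : Set X} {g : X → E} (hS : IsClosed S)
    (hg : ContinuousOn g S) (hsupp : HasCompactSupport g) : IntegrableOn g S μ := by
  have hcompact : IntegrableOn g (S ∩ tsupport g) μ :=
    (hg.mono inter_subset_left).integrableOn_compact' (hsupp.isCompact.inter_left hS)
      (hS.inter (isClosed_tsupport g)).measurableSet
  exact hcompact.of_forall_sdiff_eq_zero hS.measurableSet fun x hx =>
    image_eq_zero_of_notMem_tsupport fun hxg => hx.2 ⟨hx.1, hxg⟩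

open Complex

section Fubini

variable {E : Type*} [NormedAddCommGroup E] [NormedSpace ℝ E]

theorem setIntegral_reProdIm {s t : Set ℝ} {h : ℂ → E} (hh : IntegrableOn h (s ×ℂ t)) :
    ∫ z in s ×ℂ t, h z = ∫ x in s, ∫ y in t, h (x + y * I) := by
  have hcomp (z : ℂ) :
      h z = h ((measurableEquivRealProd z).1 + (measurableEquivRealProd z).2 * I) := by
    rw [measurableEquivRealProd_apply, re_add_im]
  have hpre : s ×ℂ t = measurableEquivRealProd ⁻¹' (s ×ˢ t) := rfl
  have hemb := measurableEquivRealProd.measurableEmbedding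
  have hprod : IntegrableOn (fun p : ℝ × ℝ => h (p.1 + p.2 * I)) (s ×ˢ t) := by
    rw [← volume_preserving_equiv_real_prod.integrableOn_comp_preimage hemb, ← hpre]
    exact hh.congr_fun_ae (.of_forall hcomp)
  rw [← setIntegral_prod (fun p : ℝ × ℝ => h (p.1 + p.2 * I)) hprod, ← Measure.volume_eq_prod,
    ← volume_preserving_equiv_real_prod.setIntegral_preimage_emb hemb, ← hpre]
  exact integral_congr_ae (.of_forall hcomp)

theorem setIntegral_strip_eq_intervalIntegral {a b c d : ℝ} {h : ℂ → E} (hab : a ≤ b) (hcd : c ≤ d)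
    (hh : IntegrableOn h (im ⁻¹' Ioc c d)) (hzero : ∀ z : ℂ, z.re ∉ Ioc a b → h z = 0) :
    ∫ z in im ⁻¹' Ioc c d, h z = ∫ x : ℝ in a..b, ∫ y : ℝ in c..d, h (x + y * I) := by
  have hrect : Ioc a b ×ℂ Ioc c d ⊆ im ⁻¹' Ioc c d := inter_subset_right
  rw [setIntegral_eq_of_subset_of_forall_sdiff_eq_zero (measurable_im measurableSet_Ioc) hrect
      fun z hz => hzero z fun hre => hz.2 ⟨hre, hz.1⟩,
    setIntegral_reProdIm (hh.mono_set hrect), intervalIntegral.integral_of_le hab]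
  simp only [intervalIntegral.integral_of_le hcd]

end Fubini

section WirtingerBar

variable {φ : ℂ → ℂ}

theorem continuous_wirtingerBar (hφ : ContDiff ℝ 1 φ) : Continuous (wirtingerBar φ) := by
  have := hφ.continuous_fderiv one_ne_zero
  unfold wirtingerBar
  fun_prop

theorem tsupport_wirtingerBar_subset (φ : ℂ → ℂ) : tsupport (wirtingerBar φ) ⊆ tsupport φ := by
  refine closure_minimal (fun z hz => ?_) (isClosed_tsupport φ)
  refine tsupport_fderiv_subset ℝ (subset_tsupport _ fun h => hz ?_)
  simp only [wirtingerBar, h, zero_apply, mul_zero, add_zero]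

theorem hasCompactSupport_wirtingerBar (hsupp : HasCompactSupport φ) :
    HasCompactSupport (wirtingerBar φ) :=
  hsupp.of_isClosed_subset (isClosed_tsupport _) (tsupport_wirtingerBar_subset φ)

end WirtingerBar

section Green

variable {E : Type*} [NormedAddCommGroup E] [NormedSpace ℂ E]
  {G : Set ℂ} {φ : ℂ → ℂ} {f : ℂ → E}

-- A complex linear `L` satisfies `L I = I • L 1`, so it does not contribute to `∂̄`.
theorem I_smul_apply_one_sub_apply_I_eq_wirtingerBar (φ : ℂ → ℂ) (z c : ℂ) (L : ℂ →L[ℂ] E)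
    (v : E) :
    I • (c • L.restrictScalars ℝ + (fderiv ℝ φ z).smulRight v) 1 -
        (c • L.restrictScalars ℝ + (fderiv ℝ φ z).smulRight v) I =
      (2 * I) • wirtingerBar φ z • v := by
  have hL : L I = I • L 1 := by rw [← map_smul, smul_eq_mul, mul_one]
  simp only [add_apply, smul_apply, ContinuousLinearMap.smulRight_apply,
    ContinuousLinearMap.coe_restrictScalars', hL, wirtingerBar]
  match_scalars
  · ring
  · linear_combination (-fderiv ℝ φ z I) * I_sq

theorem integral_boundary_rect_smul_eq_wirtingerBar {a b c d : ℝ} (hG : IsOpen G)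
    (hφ : ContDiff ℝ 1 φ) (hsub : tsupport φ ⊆ G)
    (hf : ContinuousOn f (G ∩ (uIcc a b ×ℂ uIcc c d)))
    (hd : DifferentiableOn ℂ f (G ∩ (uIoo a b ×ℂ uIoo c d))) :
    (∫ x : ℝ in a..b, φ (x + c * I) • f (x + c * I)) -
        (∫ x : ℝ in a..b, φ (x + d * I) • f (x + d * I)) +
        I • (∫ y : ℝ in c..d, φ (b + y * I) • f (b + y * I)) -
        I • (∫ y : ℝ in c..d, φ (a + y * I) • f (a + y * I)) =
      (2 * I) • ∫ x : ℝ in a..b, ∫ y : ℝ in c..d,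
        wirtingerBar φ (x + y * I) • f (x + y * I) := by
  have hcont := continuousOn_smul_of_tsupport_subset hG hφ.continuous.continuousOn hsub hf
  have hcont_bar := continuousOn_smul_of_tsupport_subset hG
    (continuous_wirtingerBar hφ).continuousOn ((tsupport_wirtingerBar_subset φ).trans hsub) hf
  have hderiv (z : ℂ) (hz : z ∈ uIoo a b ×ℂ uIoo c d) :=
    hasFDerivAt_smul_of_mem_tsupport_imp (hφ.differentiable one_ne_zero z).hasFDerivAt fun hzφ =>
      (hd.differentiableAt ((hG.inter (isOpen_Ioo.reProdIm isOpen_Ioo)).mem_nhds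
        ⟨hsub hzφ, hz⟩)).hasFDerivAt.restrictScalars ℝ
  have hgreen := integral_boundary_rect_of_continuousOn_of_hasFDerivAt_real _ _ ⟨a, c⟩ ⟨b, d⟩
    hcont hderiv (by
      simp only [I_smul_apply_one_sub_apply_I_eq_wirtingerBar]
      exact (hcont_bar.const_smul (2 * I)).integrableOn_compact
        (isCompact_uIcc.reProdIm isCompact_uIcc))
  simpa only [I_smul_apply_one_sub_apply_I_eq_wirtingerBar, intervalIntegral.integral_smul]
    using hgreen

theorem integrableOn_wirtingerBar_smul {S : Set ℂ} (hG : IsOpen G) (hS : IsClosed S)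
    (hφ : ContDiff ℝ 1 φ) (hsupp : HasCompactSupport φ) (hsub : tsupport φ ⊆ G)
    (hf : ContinuousOn f (G ∩ S)) : IntegrableOn (fun z => wirtingerBar φ z • f z) S :=
  integrableOn_of_continuousOn_of_hasCompactSupport hS
    (continuousOn_smul_of_tsupport_subset hG (continuous_wirtingerBar hφ).continuousOn
      ((tsupport_wirtingerBar_subset φ).trans hsub) hf)
    (hasCompactSupport_wirtingerBar hsupp).smul_right

theorem setIntegral_strip_wirtingerBar_smul {c d : ℝ} (hcd : c ≤ d) (hG : IsOpen G)
    (hφ : ContDiff ℝ 1 φ) (hsupp : HasCompactSupport φ) (hsub : tsupport φ ⊆ G)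
    (hf : ContinuousOn f (G ∩ im ⁻¹' Icc c d)) (hd : DifferentiableOn ℂ f (G ∩ im ⁻¹' Ioo c d)) :
    ∫ z in im ⁻¹' Ioc c d, wirtingerBar φ z • f z =
      (I / 2) • ((∫ x : ℝ, φ (x + d * I) • f (x + d * I)) -
        ∫ x : ℝ, φ (x + c * I) • f (x + c * I)) := by
  obtain ⟨R, hR_pos, hR⟩ := hsupp.isBounded.exists_pos_norm_lt
  have hzero {ψ : ℂ → ℂ} (hψ : tsupport ψ ⊆ tsupport φ) {z : ℂ} (hz : z.re ∉ Ioo (-R) R) :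
      ψ z = 0 :=
    image_eq_zero_of_notMem_tsupport fun hzψ =>
      hz (abs_lt.1 ((abs_re_le_norm z).trans_lt (hR z (hψ hzψ))))
  have hright (y : ℝ) : φ (R + y * I) = 0 := hzero subset_rfl (by simp)
  have hleft (y : ℝ) : φ ((-R : ℝ) + y * I) = 0 := hzero subset_rfl (by simp)
  have hline (y : ℝ) : ∫ x : ℝ in -R..R, φ (x + y * I) • f (x + y * I) =
      ∫ x : ℝ, φ (x + y * I) • f (x + y * I) := by
    refine intervalIntegral.integral_eq_integral_of_support_subset
      (Function.support_subset_iff'.2 fun x hx => ?_)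
    have hre : (x + y * I : ℂ).re ∉ Ioo (-R) R := by
      simpa using fun hx' => hx (Ioo_subset_Ioc_self hx')
    rw [hzero subset_rfl hre, zero_smul]
  have harea := setIntegral_strip_eq_intervalIntegral (neg_le_self hR_pos.le) hcd
    ((integrableOn_wirtingerBar_smul hG (isClosed_Icc.preimage continuous_im) hφ hsupp hsub
      hf).mono_set (preimage_mono Ioc_subset_Icc_self))
    fun z hz => by
      rw [hzero (tsupport_wirtingerBar_subset φ) fun hz' => hz (Ioo_subset_Ioc_self hz'), zero_smul]
  have hrect := integral_boundary_rect_smul_eq_wirtingerBar (a := -R) (b := R) (c := c) (d := d)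
    hG hφ hsub (hf.mono fun z hz => ⟨hz.1, uIcc_of_le hcd ▸ hz.2.2⟩)
    (hd.mono fun z hz => ⟨hz.1, uIoo_of_le hcd ▸ hz.2.2⟩)
  simp only [hline, hleft, hright, zero_smul, intervalIntegral.integral_zero, smul_zero,
    add_zero, sub_zero, ← harea] at hrect
  have hI : I / 2 * (2 * I) = -1 := by linear_combination I_sq
  rw [← neg_sub, hrect, smul_neg, smul_smul, hI, neg_one_smul, neg_neg]

theorem setIntegral_im_pos_wirtingerBar_smul (hG : IsOpen G) (hφ : ContDiff ℝ 1 φ)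
    (hsupp : HasCompactSupport φ) (hsub : tsupport φ ⊆ G)
    (hf : ContinuousOn f (G ∩ {z | 0 ≤ z.im})) (hd : DifferentiableOn ℂ f (G ∩ {z | 0 < z.im})) :
    ∫ z in {z | 0 < z.im}, wirtingerBar φ z • f z = -(I / 2) • ∫ x : ℝ, φ x • f x := by
  obtain ⟨R, hR_pos, hR⟩ := hsupp.isBounded.exists_pos_norm_lt
  have him {z : ℂ} (hz : z ∈ tsupport φ) : z.im < R := (im_le_norm z).trans_lt (hR z hz)
  have htop (x : ℝ) : φ (x + R * I) = 0 :=
    image_eq_zero_of_notMem_tsupport fun h => (him h).ne (by simp)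
  have hstrip := setIntegral_strip_wirtingerBar_smul hR_pos.le hG hφ hsupp hsub
    (hf.mono fun z hz => ⟨hz.1, hz.2.1⟩) (hd.mono fun z hz => ⟨hz.1, hz.2.1⟩)
  rw [setIntegral_eq_of_subset_of_forall_sdiff_eq_zero
    (measurableSet_lt measurable_const measurable_im) (s := im ⁻¹' Ioc 0 R)
    (fun z hz => hz.1), hstrip]
  · simp [htop]
  · intro z hz
    have hbar : wirtingerBar φ z = 0 := image_eq_zero_of_notMem_tsupport fun h =>
      hz.2 ⟨hz.1, (him (tsupport_wirtingerBar_subset φ h)).le⟩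
    rw [hbar, zero_smul]

theorem setIntegral_im_nonpos_wirtingerBar_smul (hG : IsOpen G) (hφ : ContDiff ℝ 1 φ)
    (hsupp : HasCompactSupport φ) (hsub : tsupport φ ⊆ G)
    (hf : ContinuousOn f (G ∩ {z | z.im ≤ 0})) (hd : DifferentiableOn ℂ f (G ∩ {z | z.im < 0})) :
    ∫ z in {z | z.im ≤ 0}, wirtingerBar φ z • f z = (I / 2) • ∫ x : ℝ, φ x • f x := by
  obtain ⟨R, hR_pos, hR⟩ := hsupp.isBounded.exists_pos_norm_lt
  have him {z : ℂ} (hz : z ∈ tsupport φ) : -R < z.im :=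
    (abs_lt.1 ((abs_im_le_norm z).trans_lt (hR z hz))).1
  have hbottom (x : ℝ) : φ (x + (-R : ℝ) * I) = 0 :=
    image_eq_zero_of_notMem_tsupport fun h => (him h).ne (by simp)
  have hstrip := setIntegral_strip_wirtingerBar_smul (neg_nonpos.2 hR_pos.le) hG hφ hsupp hsub
    (hf.mono fun z hz => ⟨hz.1, hz.2.2⟩) (hd.mono fun z hz => ⟨hz.1, hz.2.2⟩)
  rw [setIntegral_eq_of_subset_of_forall_sdiff_eq_zero
    (measurableSet_le measurable_im measurable_const) (s := im ⁻¹' Ioc (-R) 0)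
    (fun z hz => hz.2), hstrip]
  · simp only [hbottom, zero_smul, integral_zero, sub_zero, ofReal_zero, zero_mul, add_zero]
  · intro z hz
    have hbar : wirtingerBar φ z = 0 := image_eq_zero_of_notMem_tsupport fun h =>
      hz.2 ⟨him (tsupport_wirtingerBar_subset φ h), hz.1⟩
    rw [hbar, zero_smul]

theorem integrable_smul_ofReal (hG : IsOpen G) (hφ : Continuous φ)
    (hsupp : HasCompactSupport φ) (hsub : tsupport φ ⊆ G)
    (hf : ContinuousOn f (G ∩ {z | z.im = 0})) : Integrable fun x : ℝ => φ x • f x :=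
  ((continuousOn_smul_of_tsupport_subset hG hφ.continuousOn hsub hf).comp_continuous
    continuous_ofReal ofReal_im).integrable_of_hasCompactSupport
      (hsupp.smul_right.comp_isClosedEmbedding isometry_ofReal.isClosedEmbedding)

theorem setIntegral_ofReal_smul_sub {g : ℂ → E} (hG : IsOpen G) (hφ : Continuous φ)
    (hsupp : HasCompactSupport φ) (hsub : tsupport φ ⊆ G)
    (hf : ContinuousOn f (G ∩ {z | z.im = 0})) (hg : ContinuousOn g (G ∩ {z | z.im = 0})) :
    ∫ x in {x : ℝ | (x : ℂ) ∈ G}, φ x • (f x - g x) =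
      (∫ x : ℝ, φ x • f x) - ∫ x : ℝ, φ x • g x := by
  rw [setIntegral_eq_integral_of_forall_compl_eq_zero fun x hx => by
      rw [image_eq_zero_of_notMem_tsupport fun h => hx (hsub h), zero_smul],
    ← integral_sub (integrable_smul_ofReal hG hφ hsupp hsub hf)
      (integrable_smul_ofReal hG hφ hsupp hsub hg)]
  simp only [smul_sub]

end Green

theorem wirtingerBar_of_boundary_jump_general
    {E : Type*} [NormedAddCommGroup E] [NormedSpace ℂ E]
    {G : Set ℂ} (hG : IsOpen G) {fp fm : ℂ → E}
    (hfp_cont : ContinuousOn fp {z | z ∈ G ∧ 0 ≤ z.im})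
    (hfp_holo : DifferentiableOn ℂ fp {z | z ∈ G ∧ 0 < z.im})
    (hfm_cont : ContinuousOn fm {z | z ∈ G ∧ z.im ≤ 0})
    (hfm_holo : DifferentiableOn ℂ fm {z | z ∈ G ∧ z.im < 0})
    {F : ℂ → E} (hF : ∀ z, F z = if 0 < z.im then fp z else fm z)
    {φ : ℂ → ℂ} (hφ : ContDiff ℝ 1 φ) (hsupp : HasCompactSupport φ) (hsub : tsupport φ ⊆ G) :
    ∫ z : ℂ, wirtingerBar φ z • F z =
      -(I / 2) • ∫ x in {x : ℝ | (x : ℂ) ∈ G}, φ x • (fp x - fm x) := by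
  have hfp_int := (integrableOn_wirtingerBar_smul hG (isClosed_Ici.preimage continuous_im) hφ hsupp
    hsub hfp_cont).mono_set (preimage_mono Ioi_subset_Ici_self)
  have hfm_int := integrableOn_wirtingerBar_smul hG (isClosed_Iic.preimage continuous_im) hφ hsupp
    hsub hfm_cont
  have hupper : MeasurableSet {z : ℂ | 0 < z.im} := measurableSet_lt measurable_const measurable_im
  have hsplit : (fun z => wirtingerBar φ z • F z) = {z : ℂ | 0 < z.im}.piecewise
      (fun z => wirtingerBar φ z • fp z) fun z => wirtingerBar φ z • fm z := by
    ext z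
    simp only [hF, piecewise, mem_ofPred_eq, smul_ite]
  have hcompl : {z : ℂ | 0 < z.im}ᶜ = {z | z.im ≤ 0} := by ext; simp
  rw [hsplit, integral_piecewise hupper hfp_int (hcompl ▸ hfm_int), hcompl,
    setIntegral_im_pos_wirtingerBar_smul hG hφ hsupp hsub hfp_cont hfp_holo,
    setIntegral_im_nonpos_wirtingerBar_smul hG hφ hsupp hsub hfm_cont hfm_holo,
    setIntegral_ofReal_smul_sub hG hφ.continuous hsupp hsub
      (hfp_cont.mono fun z hz => ⟨hz.1, hz.2.ge⟩) (hfm_cont.mono fun z hz => ⟨hz.1, hz.2.le⟩)]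
  module

/-- If `f₊` is continuous on `{z ∈ G : Im z ≥ 0}` and holomorphic on
`{z ∈ G : Im z > 0}`, `f₋` is continuous on `{z ∈ G : Im z ≤ 0}` and holomorphic on
`{z ∈ G : Im z < 0}`, and `F = f₊` on `{Im > 0}`, `F = f₋` on `{Im ≤ 0}`, then for
every test function `φ` with compact support contained in `G`,
`∫ F ∂̄φ d²z = -(i/2) ∫_{x ∈ ℝ ∩ G} (f₊(x) - f₋(x)) φ(x) dx`, i.e.
`∂̄F(x+iy) = (i/2)(f(x+i0) - f(x-i0)) δ(y)` as distributions. -/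
theorem wirtingerBar_of_boundary_jump
    (G : Set ℂ) (hG : IsOpen G) (fp fm : ℂ → ℂ)
    (hfp_cont : ContinuousOn fp {z | z ∈ G ∧ 0 ≤ z.im})
    (hfp_holo : DifferentiableOn ℂ fp {z | z ∈ G ∧ 0 < z.im})
    (hfm_cont : ContinuousOn fm {z | z ∈ G ∧ z.im ≤ 0})
    (hfm_holo : DifferentiableOn ℂ fm {z | z ∈ G ∧ z.im < 0})
    (F : ℂ → ℂ) (hF : ∀ z, F z = if 0 < z.im then fp z else fm z)
    (φ : ℂ → ℂ) (hφ : ContDiff ℝ (⊤ : ℕ∞) φ) (hsupp : HasCompactSupport φ)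
    (hsub : tsupport φ ⊆ G) :
    ∫ z : ℂ, F z * wirtingerBar φ z =
      -(Complex.I / 2) * ∫ x in {x : ℝ | (x : ℂ) ∈ G}, (fp x - fm x) * φ x := by
  simpa only [smul_eq_mul, mul_comm] using wirtingerBar_of_boundary_jump_general hG hfp_cont
    hfp_holo hfm_cont hfm_holo hF (hφ.of_le (by simp)) hsupp hsub
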